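/- Let S be a nonempty set, N : S → ℝ with N(x) ≥ 0 for all x ∈ S, and D : S → ℝ with D(x) > 0 for all x ∈ S. Suppose x* ∈ S attains the maximum of N(x)/D(x) over S with value q*, and suppose that for every q ∈ ℝ the supremum T(q) = sup_{x ∈ S} (N(x) − q·D(x)) is attained at some point of S. Then for any q ∈ ℝ, T(q) = 0 if and only if q = q*. -/

import Mathlib

/-- Dinkelbach root characterization: if `xs` maximizes the ratio `N x / D x`
with value `qstar`, and for every `q` the supremum defining
`T q = sup_{x ∈ S} (N x - q * D x)` is attained at some point of `S`, then
`T q = 0 ↔ q = qstar`. -/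
theorem dinkelbach_root_iff {S : Type*} [Nonempty S] (N D : S → ℝ)
    (hN : ∀ x, 0 ≤ N x) (hD : ∀ x, 0 < D x)
    (xs : S) (qstar : ℝ) (hqstar : qstar = N xs / D xs)
    (hmax : ∀ x, N x / D x ≤ N xs / D xs)
    (T : ℝ → ℝ) (hT : ∀ q, T q = sSup (Set.range fun x => N x - q * D x))
    (hatt : ∀ q : ℝ, ∃ x : S,
      IsGreatest (Set.range fun y => N y - q * D y) (N x - q * D x)) :
    ∀ q : ℝ, T q = 0 ↔ q = qstar := by
  intro q
  obtain ⟨x, hx⟩ := hatt q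
  have hTq : T q = N x - q * D x := by rw [hT, hx.csSup_eq]
  have h1 : ∀ y, N y ≤ qstar * D y := fun y => by
    have := hmax y
    rw [← hqstar, div_le_iff₀ (hD y)] at this
    exact this
  have h2 : N xs = qstar * D xs := by
    rw [hqstar, div_mul_cancel₀ _ (hD xs).ne']
  have h3 : N xs - q * D xs ≤ N x - q * D x := hx.2 ⟨xs, rfl⟩
  rw [hTq]
  constructor
  · intro h
    apply le_antisymm
    · exact le_of_mul_le_mul_right (by linarith [h1 x]) (hD x)
    · exact le_of_mul_le_mul_right (by linarith) (hD xs)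
  · intro h
    subst h
    linarith [h1 x]
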